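/- Evolution of the velocity Fisher information under the relaxation collision operator: if h : [0,∞) × 𝕋^d × ℝ^d → ℝ is smooth, bounded above and below by positive constants, has all partial derivatives bounded, and solves ∂_t h = λ(Πh − h) with λ > 0, then for all t ≥ 0: (d/dt) I^V(h_t) = −λ ( I^V(h_t) + I^{ΠV/V}(h_t) ). -/

import Mathlib

/-!
Write the Fisher integrand as `F = |∇_v h|²/h` on phase space. Since `h` is bounded below by a
positive constant and its first two derivatives are bounded, `F` and `∂_t F` are bounded
(`fisher_bounded`, `fisherDot_bounded`), so their products with the Gaussian are dominated by an
integrable function and `I^V` may be differentiated under the integral sign.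

At a time `t ≥ 0` the equation gives `∂_t h = λ(Πh - h)`, and since `Πh` does not depend on `v`,
symmetry of second derivatives gives `∂_t ∇_v h = ∇_v ∂_t h = -λ ∇_v h` (`fderiv_time_velocity`).
The quotient rule then yields
`∂_t F = -2λ |∇_v h|²/h - λ |∇_v h|² (Πh - h)/h² = -λ (F + F · Πh/h)`,
whose integral is the claim. As `h` is smooth on all of `ℝ` in time, the derivative at `t = 0` is
two-sided.
-/

open MeasureTheory Real Filter

noncomputable section

/-- The standard Gaussian density `ℳ(v) = (2π)^{-d/2} exp(-|v|²/2)` on `ℝ^d`. -/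
def gauss (d : ℕ) (v : Fin d → ℝ) : ℝ :=
  (2 * Real.pi) ^ (-(d : ℝ) / 2) * Real.exp (-(∑ i, v i ^ 2) / 2)

/-- Fundamental domain `[0,1]^d` of the torus `𝕋^d`; the normalized Lebesgue measure on
the torus is the restriction of Lebesgue measure to this cube. -/
def cube (d : ℕ) : Set (Fin d → ℝ) := Set.Icc 0 1

/-- A function of `(x,v)` represents a function on `𝕋^d × ℝ^d` iff it is `ℤ^d`-periodic in `x`. -/
def IsPeriodic (d : ℕ) (f : (Fin d → ℝ) → (Fin d → ℝ) → ℝ) : Prop :=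
  ∀ (x v : Fin d → ℝ) (k : Fin d → ℤ), f (x + fun i => (k i : ℝ)) v = f x v

/-- The projection `Πf(x) = ∫ f(x,u) ℳ(u) du`. -/
def proj (d : ℕ) (f : (Fin d → ℝ) → (Fin d → ℝ) → ℝ) (x : Fin d → ℝ) : ℝ :=
  ∫ u, f x u * gauss d u

/-- Euclidean dot product on `ℝ^d`. -/
def dotp (d : ℕ) (a b : Fin d → ℝ) : ℝ := ∑ i, a i * b i

/-- Squared Euclidean norm on `ℝ^d`. -/
def nsq (d : ℕ) (a : Fin d → ℝ) : ℝ := ∑ i, a i ^ 2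

/-- Gradient in the `x` variable. -/
def gradx (d : ℕ) (f : (Fin d → ℝ) → (Fin d → ℝ) → ℝ) (x v : Fin d → ℝ) : Fin d → ℝ :=
  fun i => fderiv ℝ (fun y => f y v) x (Pi.single i 1)

/-- Gradient in the `v` variable. -/
def gradv (d : ℕ) (f : (Fin d → ℝ) → (Fin d → ℝ) → ℝ) (x v : Fin d → ℝ) : Fin d → ℝ :=
  fun i => fderiv ℝ (fun w => f x w) v (Pi.single i 1)

/-- Gradient of a function of `x` only. -/
def grad1 (d : ℕ) (g : (Fin d → ℝ) → ℝ) (x : Fin d → ℝ) : Fin d → ℝ :=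
  fun i => fderiv ℝ g x (Pi.single i 1)

/-- Laplacian in the `v` variable. -/
def lapv (d : ℕ) (f : (Fin d → ℝ) → (Fin d → ℝ) → ℝ) (x v : Fin d → ℝ) : ℝ :=
  ∑ i, fderiv ℝ (fun w => gradv d f x w i) v (Pi.single i 1)

/-- Integral against `μ = ℳ(v) dv dx` on `𝕋^d × ℝ^d`. -/
def intMu (d : ℕ) (F : (Fin d → ℝ) → (Fin d → ℝ) → ℝ) : ℝ :=
  ∫ x in cube d, ∫ v, F x v * gauss d v

/-- `I^X(h) = ∫ |∇_x h|²/h dμ`. -/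
def IX (d : ℕ) (h : (Fin d → ℝ) → (Fin d → ℝ) → ℝ) : ℝ :=
  intMu d fun x v => nsq d (gradx d h x v) / h x v

/-- `I^V(h) = ∫ |∇_v h|²/h dμ`. -/
def IV (d : ℕ) (h : (Fin d → ℝ) → (Fin d → ℝ) → ℝ) : ℝ :=
  intMu d fun x v => nsq d (gradv d h x v) / h x v

/-- `I^M(h) = ∫ (∇_x h · ∇_v h)/h dμ`. -/
def IM (d : ℕ) (h : (Fin d → ℝ) → (Fin d → ℝ) → ℝ) : ℝ :=
  intMu d fun x v => dotp d (gradx d h x v) (gradv d h x v) / h x v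

/-- The full Fisher information `I(h) = ∫ |∇_{x,v} h|²/h dμ`. -/
def Ifull (d : ℕ) (h : (Fin d → ℝ) → (Fin d → ℝ) → ℝ) : ℝ :=
  intMu d fun x v => (nsq d (gradx d h x v) + nsq d (gradv d h x v)) / h x v

/-- `I^{ΠX}(h) = ∫_{𝕋^d} |∇_x Πh|²/Πh dx`. -/
def IPiX (d : ℕ) (h : (Fin d → ℝ) → (Fin d → ℝ) → ℝ) : ℝ :=
  ∫ x in cube d, nsq d (grad1 d (proj d h) x) / proj d h x

/-- `I^{ΠX/X}(h) = ∫ (|∇_x(Πh/h)|²/(Πh/h)) h dμ`. -/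
def IPiXX (d : ℕ) (h : (Fin d → ℝ) → (Fin d → ℝ) → ℝ) : ℝ :=
  intMu d fun x v =>
    nsq d (gradx d (fun y w => proj d h y / h y w) x v) / (proj d h x / h x v) * h x v

/-- `I^{ΠV/V}(h) = ∫ (|∇_v h|²/h)(Πh/h) dμ`. -/
def IPiVV (d : ℕ) (h : (Fin d → ℝ) → (Fin d → ℝ) → ℝ) : ℝ :=
  intMu d fun x v => nsq d (gradv d h x v) / h x v * (proj d h x / h x v)

/-- The relative entropy `H(h) = ∫ h log h dμ`. -/
def Hent (d : ℕ) (h : (Fin d → ℝ) → (Fin d → ℝ) → ℝ) : ℝ :=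
  intMu d fun x v => h x v * Real.log (h x v)

/-- The projected entropy `H_Π(h) = ∫_{𝕋^d} Πh log Πh dx`. -/
def HPi (d : ℕ) (h : (Fin d → ℝ) → (Fin d → ℝ) → ℝ) : ℝ :=
  ∫ x in cube d, proj d h x * Real.log (proj d h x)

/-- The local average speed `U(x) = ∫ v h(x,v) ℳ(v) dv`. -/
def Uvec (d : ℕ) (h : (Fin d → ℝ) → (Fin d → ℝ) → ℝ) (x : Fin d → ℝ) : Fin d → ℝ :=
  fun i => ∫ v, v i * h x v * gauss d v

/-- The divergence `∇_x · U`. -/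
def divU (d : ℕ) (h : (Fin d → ℝ) → (Fin d → ℝ) → ℝ) (x : Fin d → ℝ) : ℝ :=
  ∑ i, fderiv ℝ (fun y => Uvec d h y i) x (Pi.single i 1)

/-- The `p`-entropy `H^{(p)}(h) = ∫ (h^p - h)/(p(p-1)) dμ`. -/
def Hp (d : ℕ) (p : ℝ) (h : (Fin d → ℝ) → (Fin d → ℝ) → ℝ) : ℝ :=
  intMu d fun x v => (h x v ^ p - h x v) / (p * (p - 1))

/-- The projected `p`-entropy `H_Π^{(p)}(h) = ∫_{𝕋^d} ((Πh)^p - Πh)/(p(p-1)) dx`. -/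
def HpPi (d : ℕ) (p : ℝ) (h : (Fin d → ℝ) → (Fin d → ℝ) → ℝ) : ℝ :=
  ∫ x in cube d, ((proj d h x) ^ p - proj d h x) / (p * (p - 1))

/-- The `p`-Fisher information `I^{(p)}(h) = ∫ h^{p-2} |∇_{x,v} h|² dμ`. -/
def Ipfull (d : ℕ) (p : ℝ) (h : (Fin d → ℝ) → (Fin d → ℝ) → ℝ) : ℝ :=
  intMu d fun x v => h x v ^ (p - 2) * (nsq d (gradx d h x v) + nsq d (gradv d h x v))

/-- The spatial `p`-Fisher information `∫ h^{p-2} |∇_x h|² dμ`. -/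
def IpX (d : ℕ) (p : ℝ) (h : (Fin d → ℝ) → (Fin d → ℝ) → ℝ) : ℝ :=
  intMu d fun x v => h x v ^ (p - 2) * nsq d (gradx d h x v)

/-- Regularity of a time-dependent `h`: smooth, periodic in `x`, bounded above and below by
positive constants, with all partial derivatives bounded. -/
def Regular (d : ℕ) (h : ℝ → (Fin d → ℝ) → (Fin d → ℝ) → ℝ) : Prop :=
  ContDiff ℝ (⊤ : ℕ∞) (fun q : ℝ × (Fin d → ℝ) × (Fin d → ℝ) => h q.1 q.2.1 q.2.2) ∧
  (∀ t, IsPeriodic d (h t)) ∧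
  (∃ c C : ℝ, 0 < c ∧ ∀ t x v, c ≤ h t x v ∧ h t x v ≤ C) ∧
  (∀ n : ℕ, ∃ C : ℝ, ∀ q : ℝ × (Fin d → ℝ) × (Fin d → ℝ),
    ‖iteratedFDeriv ℝ n (fun r : ℝ × (Fin d → ℝ) × (Fin d → ℝ) => h r.1 r.2.1 r.2.2) q‖ ≤ C)

/-- Regularity of a time-independent `h`: smooth, periodic in `x`, bounded above and below by
positive constants, with bounded gradient. -/
def RegularStatic (d : ℕ) (h : (Fin d → ℝ) → (Fin d → ℝ) → ℝ) : Prop :=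
  ContDiff ℝ (⊤ : ℕ∞) (fun q : (Fin d → ℝ) × (Fin d → ℝ) => h q.1 q.2) ∧
  IsPeriodic d h ∧
  (∃ c C : ℝ, 0 < c ∧ ∀ x v, c ≤ h x v ∧ h x v ≤ C) ∧
  (∃ C : ℝ, ∀ q : (Fin d → ℝ) × (Fin d → ℝ),
    ‖fderiv ℝ (fun r : (Fin d → ℝ) × (Fin d → ℝ) => h r.1 r.2) q‖ ≤ C)

/-- `h` solves the linear relaxation Boltzmann equation `∂_t h + v·∇_x h = λ(Πh - h)` for `t ≥ 0`. -/
def SolvesLRB (d : ℕ) (lam : ℝ) (h : ℝ → (Fin d → ℝ) → (Fin d → ℝ) → ℝ) : Prop :=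
  ∀ t x v, 0 ≤ t →
    deriv (fun s => h s x v) t + dotp d v (gradx d (h t) x v)
      = lam * (proj d (h t) x - h t x v)

/-- `h` solves the free transport equation `∂_t h + v·∇_x h = 0` for `t ≥ 0`. -/
def SolvesTransport (d : ℕ) (h : ℝ → (Fin d → ℝ) → (Fin d → ℝ) → ℝ) : Prop :=
  ∀ t x v, 0 ≤ t →
    deriv (fun s => h s x v) t + dotp d v (gradx d (h t) x v) = 0

/-- `h` solves the pure relaxation equation `∂_t h = λ(Πh - h)` for `t ≥ 0`. -/
def SolvesCollision (d : ℕ) (lam : ℝ) (h : ℝ → (Fin d → ℝ) → (Fin d → ℝ) → ℝ) : Prop :=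
  ∀ t x v, 0 ≤ t →
    deriv (fun s => h s x v) t = lam * (proj d (h t) x - h t x v)

/-- `h` solves the kinetic Fokker–Planck equation `∂_t h + v·∇_x h = Δ_v h - v·∇_v h` for `t ≥ 0`. -/
def SolvesKFP (d : ℕ) (h : ℝ → (Fin d → ℝ) → (Fin d → ℝ) → ℝ) : Prop :=
  ∀ t x v, 0 ≤ t →
    deriv (fun s => h s x v) t + dotp d v (gradx d (h t) x v)
      = lapv d (h t) x v - dotp d v (gradv d (h t) x v)

/-! ### Integration against the Gaussian -/

/-- Phase space `ℝ × ℝ^d × ℝ^d` of triples `(t, x, v)`. -/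
abbrev Phase (d : ℕ) : Type := ℝ × (Fin d → ℝ) × (Fin d → ℝ)

lemma continuous_gauss (d : ℕ) : Continuous (gauss d) := by
  unfold gauss
  fun_prop

lemma gauss_nonneg (d : ℕ) (v : Fin d → ℝ) : 0 ≤ gauss d v := by
  unfold gauss
  positivity

lemma integrable_gauss (d : ℕ) : Integrable (gauss d) := by
  have h1 : Integrable (fun v : Fin d → ℝ => ∏ i, Real.exp (-(1 / 2) * v i ^ 2)) :=
    Integrable.fintype_prod (f := fun _ (y : ℝ) => Real.exp (-(1 / 2) * y ^ 2))
      fun _ => integrable_exp_neg_mul_sq (by norm_num)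
  convert h1.const_mul ((2 * Real.pi) ^ (-(d : ℝ) / 2)) using 2 with v
  rw [gauss, ← Real.exp_sum, ← Finset.mul_sum]
  congr 2
  ring

/-- Lebesgue measure on `[0,1]^d × ℝ^d`, with respect to which `intMu` is a single integral. -/
def muBase (d : ℕ) : Measure ((Fin d → ℝ) × (Fin d → ℝ)) :=
  ((volume : Measure (Fin d → ℝ)).restrict (cube d)).prod volume

lemma integrable_gauss_snd (d : ℕ) :
    Integrable (fun p : (Fin d → ℝ) × (Fin d → ℝ) => gauss d p.2) (muBase d) := by
  have : IsFiniteMeasure ((volume : Measure (Fin d → ℝ)).restrict (cube d)) :=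
    ⟨by simpa [cube] using (isCompact_Icc (a := (0 : Fin d → ℝ)) (b := 1)).measure_lt_top⟩
  exact (integrable_gauss d).comp_snd _

lemma integrable_mul_gauss {d : ℕ} {f : (Fin d → ℝ) × (Fin d → ℝ) → ℝ} (hf : Continuous f)
    {K : ℝ} (hK : ∀ p, |f p| ≤ K) :
    Integrable (fun p => f p * gauss d p.2) (muBase d) :=
  (integrable_gauss_snd d).bdd_mul (c := K) hf.aestronglyMeasurable (ae_of_all _ hK)

lemma intMu_eq {d : ℕ} {F : (Fin d → ℝ) → (Fin d → ℝ) → ℝ}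
    (hF : Integrable (fun p => F p.1 p.2 * gauss d p.2) (muBase d)) :
    intMu d F = ∫ p, F p.1 p.2 * gauss d p.2 ∂(muBase d) :=
  (integral_prod _ hF).symm

/-! ### Coordinate derivatives on phase space -/

/-- The unit vector of phase space in the time direction. -/
def dirT (d : ℕ) : Phase d := (1, 0, 0)

/-- The unit vector of phase space in the direction of the `i`-th velocity coordinate. -/
def dirV {d : ℕ} (i : Fin d) : Phase d := (0, 0, Pi.single i 1)

lemma norm_dirT_le (d : ℕ) : ‖dirT d‖ ≤ 1 := by
  simp [dirT, Prod.norm_def]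

lemma norm_dirV_le {d : ℕ} (i : Fin d) : ‖dirV i‖ ≤ 1 := by
  simp [dirV, Prod.norm_def, Pi.norm_single]

lemma hasDerivAt_time {d : ℕ} {f : Phase d → ℝ} {s : ℝ} {x v : Fin d → ℝ}
    (hf : DifferentiableAt ℝ f (s, x, v)) :
    HasDerivAt (fun r => f (r, x, v)) (fderiv ℝ f (s, x, v) (dirT d)) s :=
  HasFDerivAt.comp_hasDerivAt (f := fun r : ℝ => ((r, x, v) : Phase d)) s hf.hasFDerivAt
    ((hasDerivAt_id s).prodMk (hasDerivAt_const s (x, v)))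

lemma fderiv_velocity {d : ℕ} {f : Phase d → ℝ} {s : ℝ} {x v : Fin d → ℝ}
    (hf : DifferentiableAt ℝ f (s, x, v)) (i : Fin d) :
    fderiv ℝ (fun w => f (s, x, w)) v (Pi.single i 1) = fderiv ℝ f (s, x, v) (dirV i) := by
  have h1 := HasFDerivAt.comp (f := fun w : Fin d → ℝ => ((s, x, w) : Phase d)) v
    hf.hasFDerivAt ((hasFDerivAt_const s v).prodMk ((hasFDerivAt_const x v).prodMk
      (hasFDerivAt_id v)))
  have h2 : HasFDerivAt (fun w => f (s, x, w)) _ v := h1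
  rw [h2.fderiv]
  simp [dirV]

/-! ### The Fisher integrand and its time derivative -/

/-- The integrand `|∇_v H|²/H` as a function on phase space. -/
def fisher {d : ℕ} (H : Phase d → ℝ) (q : Phase d) : ℝ :=
  ∑ i, (fderiv ℝ H q (dirV i)) ^ 2 / H q

/-- The time derivative of `fisher H`, expanded by the quotient rule. -/
def fisherDot {d : ℕ} (H : Phase d → ℝ) (q : Phase d) : ℝ :=
  ∑ i, (2 * fderiv ℝ H q (dirV i) * fderiv ℝ (fderiv ℝ H) q (dirT d) (dirV i) * H q
    - (fderiv ℝ H q (dirV i)) ^ 2 * fderiv ℝ H q (dirT d)) / H q ^ 2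

section Integrand

variable {d : ℕ} {H : Phase d → ℝ}

lemma contDiff_fderiv (hH : ContDiff ℝ (⊤ : ℕ∞) H) : ContDiff ℝ (⊤ : ℕ∞) (fderiv ℝ H) :=
  hH.fderiv_right (by simp)

lemma continuous_fisher (hH : ContDiff ℝ (⊤ : ℕ∞) H) (hpos : ∀ q, H q ≠ 0) :
    Continuous (fisher H) := by
  have h0 := hH.continuous
  have h1 := (contDiff_fderiv hH).continuous
  refine continuous_finsetSum _ fun i _ => Continuous.div (by fun_prop) h0 hpos

lemma continuous_fisherDot (hH : ContDiff ℝ (⊤ : ℕ∞) H) (hpos : ∀ q, H q ≠ 0) :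
    Continuous (fisherDot H) := by
  have h0 := hH.continuous
  have h1 := (contDiff_fderiv hH).continuous
  have h2 := (contDiff_fderiv hH).continuous_fderiv (by simp)
  refine continuous_finsetSum _ fun i _ => Continuous.div (by fun_prop) (by fun_prop)
    fun q => pow_ne_zero 2 (hpos q)

lemma hasDerivAt_fisher (hH : ContDiff ℝ (⊤ : ℕ∞) H) (hpos : ∀ q, H q ≠ 0)
    (s : ℝ) (x v : Fin d → ℝ) :
    HasDerivAt (fun r => fisher H (r, x, v)) (fisherDot H (s, x, v)) s := by
  have hdH : Differentiable ℝ H := hH.differentiable (by simp)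
  have hdH' : Differentiable ℝ (fderiv ℝ H) := (contDiff_fderiv hH).differentiable (by simp)
  refine HasDerivAt.fun_sum fun i _ => ?_
  have h1 : HasDerivAt (fun r => fderiv ℝ H (r, x, v) (dirV i))
      (fderiv ℝ (fderiv ℝ H) (s, x, v) (dirT d) (dirV i)) s := by
    have := hasDerivAt_time (f := fun q => fderiv ℝ H q (dirV i)) (s := s) (x := x) (v := v)
      ((hdH' _).clm_apply (differentiableAt_const _))
    convert this using 1
    rw [fderiv_clm_apply (hdH' _) (differentiableAt_const _)]
    simp
  refine ((h1.fun_pow 2).fun_div (hasDerivAt_time (hdH (s, x, v))) (hpos _)).congr_deriv ?_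
  simp

lemma fisher_bounded {c M : ℝ} (hc : 0 < c) (hlow : ∀ q, c ≤ H q)
    (h1 : ∀ q, ‖fderiv ℝ H q‖ ≤ M) (q : Phase d) :
    |fisher H q| ≤ ∑ _i : Fin d, M ^ 2 / c := by
  refine (Finset.abs_sum_le_sum_abs _ _).trans (Finset.sum_le_sum fun i _ => ?_)
  have ha : |fderiv ℝ H q (dirV i)| ≤ M :=
    (fderiv ℝ H q).le_of_opNorm_le_of_le (h1 q) (norm_dirV_le i) |>.trans (by simp)
  rw [abs_div, abs_pow, abs_of_pos (hc.trans_le (hlow q))]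
  have := hlow q
  gcongr

lemma fisherDot_bounded {c C M : ℝ} (hc : 0 < c) (hM : 0 ≤ M) (hlow : ∀ q, c ≤ H q)
    (hup : ∀ q, H q ≤ C) (h1 : ∀ q, ‖fderiv ℝ H q‖ ≤ M)
    (h2 : ∀ q, ‖fderiv ℝ (fderiv ℝ H) q‖ ≤ M) (q : Phase d) :
    |fisherDot H q| ≤ ∑ _i : Fin d, (2 * M * M * C + M ^ 2 * M) / c ^ 2 := by
  refine (Finset.abs_sum_le_sum_abs _ _).trans (Finset.sum_le_sum fun i _ => ?_)
  have ha : |fderiv ℝ H q (dirV i)| ≤ M :=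
    (fderiv ℝ H q).le_of_opNorm_le_of_le (h1 q) (norm_dirV_le i) |>.trans (by simp)
  have ht : |fderiv ℝ H q (dirT d)| ≤ M :=
    (fderiv ℝ H q).le_of_opNorm_le_of_le (h1 q) (norm_dirT_le d) |>.trans (by simp)
  have hb : |fderiv ℝ (fderiv ℝ H) q (dirT d) (dirV i)| ≤ M := by
    have hb' : ‖fderiv ℝ (fderiv ℝ H) q (dirT d)‖ ≤ M :=
      (fderiv ℝ (fderiv ℝ H) q).le_of_opNorm_le_of_le (h2 q) (norm_dirT_le d) |>.trans (by simp)
    exact ContinuousLinearMap.le_of_opNorm_le_of_le _ hb' (norm_dirV_le i) |>.trans (by simp)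
  have hlq := hlow q
  have hHq : |H q| ≤ C := by rw [abs_of_pos (hc.trans_le hlq)]; exact hup q
  rw [abs_div, abs_pow (H q), abs_of_pos (hc.trans_le hlq)]
  have hC : 0 ≤ C := (abs_nonneg _).trans hHq
  gcongr
  refine (abs_sub _ _).trans ?_
  rw [abs_mul, abs_mul, abs_mul, abs_mul, abs_pow, abs_two]
  gcongr

end Integrand

/-- Along a solution, `∂_t h = λ(Πh - h)` with `Πh` independent of `v`, so by symmetry of second
derivatives `∂_t ∂_{v_i} h = -λ ∂_{v_i} h`. -/
lemma fderiv_time_velocity {d : ℕ} {lam : ℝ} {h : ℝ → (Fin d → ℝ) → (Fin d → ℝ) → ℝ}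
    {H : Phase d → ℝ} (hHdef : H = fun q => h q.1 q.2.1 q.2.2) (hH : ContDiff ℝ (⊤ : ℕ∞) H)
    (hpde : SolvesCollision d lam h) {t : ℝ} (ht : 0 ≤ t) (x v : Fin d → ℝ) (i : Fin d) :
    fderiv ℝ (fderiv ℝ H) (t, x, v) (dirT d) (dirV i) = -lam * fderiv ℝ H (t, x, v) (dirV i) := by
  have hdH : Differentiable ℝ H := hH.differentiable (by simp)
  have hdH' : Differentiable ℝ (fderiv ℝ H) := (contDiff_fderiv hH).differentiable (by simp)
  have hsymm : IsSymmSndFDerivAt ℝ H (t, x, v) :=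
    hH.contDiffAt.isSymmSndFDerivAt (by
      rw [minSmoothness_of_isRCLikeNormedField]
      exact WithTop.coe_le_coe.2 (le_top : (2 : ℕ∞) ≤ ⊤))
  rw [hsymm]
  have h1 := fderiv_velocity (f := fun q => fderiv ℝ H q (dirT d)) (s := t) (x := x) (v := v)
    ((hdH' _).clm_apply (differentiableAt_const _)) i
  rw [fderiv_clm_apply (hdH' _) (differentiableAt_const _)] at h1
  have h2 : (fun w => fderiv ℝ H (t, x, w) (dirT d))
      = fun w => lam * (proj d (h t) x - H (t, x, w)) := by
    funext w
    rw [← (hasDerivAt_time (hdH (t, x, w))).deriv]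
    simpa [hHdef] using hpde t x w ht
  have h3 : DifferentiableAt ℝ (fun w => H (t, x, w)) v :=
    DifferentiableAt.fun_comp' (f := fun w => ((t, x, w) : Phase d)) v (hdH _) (by fun_prop)
  rw [h2, fderiv_const_mul (h3.const_sub _), fderiv_const_sub] at h1
  have h4 := fderiv_velocity (hdH (t, x, v)) i
  simp [h4] at h1
  linarith

/-- Evolution of the velocity Fisher information under the relaxation collision
operator: `(d/dt) I^V(h_t) = -λ (I^V(h_t) + I^{ΠV/V}(h_t))`. -/
theorem velocity_fisher_collision
    (d : ℕ) (hd : 1 ≤ d) (lam : ℝ) (hlam : 0 < lam)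
    (h : ℝ → (Fin d → ℝ) → (Fin d → ℝ) → ℝ)
    (hreg : Regular d h)
    (hpde : SolvesCollision d lam h) :
    ∀ t : ℝ, 0 ≤ t →
      HasDerivAt (fun s => IV d (h s)) (-lam * (IV d (h t) + IPiVV d (h t))) t := by
  intro t ht
  obtain ⟨hsm, -, ⟨c, C, hc, hbd⟩, hder⟩ := hreg
  set H : Phase d → ℝ := fun q => h q.1 q.2.1 q.2.2 with hHdef
  obtain ⟨M1, hM1⟩ := hder 1
  obtain ⟨M2, hM2⟩ := hder 2
  have hlow : ∀ q, c ≤ H q := fun q => (hbd _ _ _).1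
  have hup : ∀ q, H q ≤ C := fun q => (hbd _ _ _).2
  have hne : ∀ q, H q ≠ 0 := fun q => (hc.trans_le (hlow q)).ne'
  have hdH : Differentiable ℝ H := hsm.differentiable (by simp)
  have h1 : ∀ q, ‖fderiv ℝ H q‖ ≤ max M1 M2 := fun q => by
    have := hM1 q
    rw [← norm_iteratedFDeriv_fderiv, norm_iteratedFDeriv_zero] at this
    exact this.trans (le_max_left _ _)
  have h2 : ∀ q, ‖fderiv ℝ (fderiv ℝ H) q‖ ≤ max M1 M2 := fun q => by
    have := hM2 q
    rw [← norm_iteratedFDeriv_fderiv, ← norm_iteratedFDeriv_fderiv,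
      norm_iteratedFDeriv_zero] at this
    exact this.trans (le_max_right _ _)
  have hM : 0 ≤ max M1 M2 := (norm_nonneg _).trans (h1 0)
  have hcF := continuous_fisher hsm hne
  have hcF' := continuous_fisherDot hsm hne
  have hbF := fisher_bounded hc hlow h1
  have hbF' := fisherDot_bounded hc hM hlow hup h1 h2
  -- The integrand of `IV` is `fisher H`.
  have hfis : ∀ s x v, nsq d (gradv d (h s) x v) / h s x v = fisher H (s, x, v) := by
    intro s x v
    rw [fisher, nsq, Finset.sum_div]
    refine Finset.sum_congr rfl fun i _ => ?_
    rw [← fderiv_velocity (hdH (s, x, v)) i]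
    rfl
  have hintF : ∀ s, Integrable (fun p : (Fin d → ℝ) × (Fin d → ℝ) =>
      fisher H (s, p.1, p.2) * gauss d p.2) (muBase d) := fun s =>
    integrable_mul_gauss (f := fun p => fisher H (s, p.1, p.2)) (hcF.comp (by fun_prop))
      fun p => hbF _
  have hIV : ∀ s, IV d (h s) = ∫ p, fisher H (s, p.1, p.2) * gauss d p.2 ∂(muBase d) := by
    intro s
    simp only [IV, hfis]
    exact intMu_eq (hintF s)
  obtain ⟨hintF', hderiv⟩ := hasDerivAt_integral_of_dominated_loc_of_deriv_le (μ := muBase d)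
    (F := fun s p => fisher H (s, p.1, p.2) * gauss d p.2)
    (F' := fun s p => fisherDot H (s, p.1, p.2) * gauss d p.2)
    (bound := fun p => (∑ _i : Fin d, (2 * max M1 M2 * max M1 M2 * C
      + max M1 M2 ^ 2 * max M1 M2) / c ^ 2) * gauss d p.2)
    (x₀ := t) univ_mem (.of_forall fun s => (hintF s).aestronglyMeasurable) (hintF t)
    (integrable_mul_gauss (f := fun p => fisherDot H (t, p.1, p.2)) (hcF'.comp (by fun_prop))
      fun p => hbF' _).aestronglyMeasurable
    (ae_of_all _ fun p s _ => by
      rw [norm_mul, Real.norm_of_nonneg (gauss_nonneg d _)]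
      exact mul_le_mul_of_nonneg_right (hbF' _) (gauss_nonneg d _))
    ((integrable_gauss_snd d).const_mul _)
    (ae_of_all _ fun p s _ => (hasDerivAt_fisher hsm hne s p.1 p.2).mul_const _)
  -- The equation at time `t` turns `fisherDot H` into the two Fisher integrands.
  have hkey : ∀ x v, fisherDot H (t, x, v) = -lam * (fisher H (t, x, v)
      + fisher H (t, x, v) * (proj d (h t) x / h t x v)) := by
    intro x v
    have hT : fderiv ℝ H (t, x, v) (dirT d) = lam * (proj d (h t) x - H (t, x, v)) := by
      rw [← (hasDerivAt_time (hdH (t, x, v))).deriv]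
      exact hpde t x v ht
    change _ = -lam * (_ + _ * (proj d (h t) x / H (t, x, v)))
    rw [fisherDot, fisher, Finset.sum_mul, ← Finset.sum_add_distrib, Finset.mul_sum]
    refine Finset.sum_congr rfl fun i _ => ?_
    rw [fderiv_time_velocity hHdef hsm hpde ht, hT]
    have := hne (t, x, v)
    field_simp
    ring
  -- Integrability of the second integrand follows from that of the other two terms, so no
  -- regularity of `proj d (h t)` is needed.
  have hintP : Integrable (fun p : (Fin d → ℝ) × (Fin d → ℝ) =>
      fisher H (t, p.1, p.2) * (proj d (h t) p.1 / h t p.1 p.2) * gauss d p.2) (muBase d) := by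
    convert (hintF'.const_mul (-lam⁻¹)).sub (hintF t) using 1
    funext p
    simp only [Pi.sub_apply, hkey]
    field_simp
    ring
  have hIP : IPiVV d (h t) = ∫ p, fisher H (t, p.1, p.2) *
      (proj d (h t) p.1 / h t p.1 p.2) * gauss d p.2 ∂(muBase d) := by
    simp only [IPiVV, hfis]
    exact intMu_eq (F := fun x v => fisher H (t, x, v) * (proj d (h t) x / h t x v)) hintP
  simp only [hIV, hIP]
  refine hderiv.congr_deriv ?_
  symm
  rw [← integral_add (hintF t) hintP, ← integral_const_mul]
  refine integral_congr_ae (ae_of_all _ fun p => ?_)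
  simp only [hkey]
  ring
end
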